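/- Fix a constant 0 < ε < 1/10. Let (T_k)_{k≥1} be a sequence of finite rooted forests, write n_k = |T_k|, call a vertex v of T_k poor if |D(v)| < εk, and call v heavy if |D_{≤(1−5ε)k}(v)| > (1−4ε)k. Suppose that (the number of poor vertices of T_k)/n_k → 0 as k → ∞. Then (the number of heavy vertices of T_k)/n_k → 0 as k → ∞. -/

import Mathlib

open Filter

/-- Iterated parent map of a rooted forest: `parIter par n v` is the vertex reached from
`v` by `n` applications of the parent map `par` (or `none` if a root is passed). -/
def parIter {V : Type*} (par : V → Option V) : ℕ → V → Option V
  | 0, v => some v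
  | n + 1, v => (parIter par n v).bind par

/-- A parent map defines a rooted forest if iterating it from any vertex eventually
reaches a root. -/
def IsRootedForest {V : Type*} (par : V → Option V) : Prop :=
  ∀ v : V, ∃ n : ℕ, parIter par n v = none

/-- `u` is an ancestor of `v`. -/
def IsAnc {V : Type*} (par : V → Option V) (u v : V) : Prop :=
  ∃ n : ℕ, 0 < n ∧ parIter par n v = some u

/-- The set `D(v)` of descendants of `v`. -/
def Desc {V : Type*} (par : V → Option V) (v : V) : Set V :=
  {w | IsAnc par v w}

/-- The set `D_{≤r}(v)` of descendants of `v` at distance at most `r`. -/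
def DescLe {V : Type*} (par : V → Option V) (v : V) (r : ℝ) : Set V :=
  {w | ∃ n : ℕ, 0 < n ∧ (n : ℝ) ≤ r ∧ parIter par n w = some v}

/-!
Let `R = ⌊r⌋`, where `r = (1 - 5ε)k`. Every vertex has at most `R` ancestors at distance at most
`r`, so `|D_{≤r}(v)|` is at most `R` on average. A heavy vertex exceeds `R` by at least `εk`, so it
suffices that all but `o(n_k)` vertices reach `R`.

A vertex that is not poor lies weakly above a *lowest* such vertex `m`, all of whose descendants
are poor. If `m` is at distance at least `R` below `v`, then `v` has a descendant at each of the
distances `1, …, R`, so `|D_{≤r}(v)| ≥ R`. The sets `D(m)` are disjoint sets of poor vertices of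
size at least `εk`, so there are at most `|Poor| / (εk)` lowest vertices, and at most `R ≤ k` times
as many, hence at most `|Poor| / ε`, vertices lie at distance less than `R` above one of them.
-/

theorem sum_ncard_setOf_comm {α β : Type*} [Fintype α] [Fintype β] (rel : α → β → Prop) :
    ∑ a, {b | rel a b}.ncard = ∑ b, {a | rel a b}.ncard := by
  classical
  simpa [Set.ncard_eq_toFinset_card', Finset.bipartiteAbove, Finset.bipartiteBelow] using
    Finset.sum_card_bipartiteAbove_eq_sum_card_bipartiteBelow
      (s := Finset.univ) (t := Finset.univ) rel

/-- Markov's inequality for `f - R + R • 1_S`, which is nonnegative. -/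
theorem sub_mul_ncard_setOf_lt_le {α 𝕜 : Type*} [Fintype α] [CommRing 𝕜] [LinearOrder 𝕜]
    [IsStrictOrderedRing 𝕜] {f : α → 𝕜} {S : Set α} {R : 𝕜} (t : 𝕜) (hR : 0 ≤ R)
    (hf : ∀ v, 0 ≤ f v) (hS : ∀ v ∉ S, R ≤ f v) (hsum : ∑ v, f v ≤ Fintype.card α * R) :
    (t - R) * {v | t < f v}.ncard ≤ R * S.ncard := by
  classical
  let g (v : α) : 𝕜 := f v - R + if v ∈ S then R else 0
  have hg (v : α) : 0 ≤ g v := by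
    by_cases hv : v ∈ S
    · simpa [g, hv] using hf v
    · simpa [g, hv] using hS v hv
  have htg (v : α) (hv : t < f v) : t - R ≤ g v := by
    dsimp only [g]
    split_ifs <;> linarith
  calc (t - R) * {v | t < f v}.ncard = ∑ v with t < f v, (t - R) := by
        rw [Finset.sum_const, nsmul_eq_mul, mul_comm, Set.ncard_eq_toFinset_card',
          Set.toFinset_ofPred]
    _ ≤ ∑ v with t < f v, g v := Finset.sum_le_sum fun v hv => htg v (by simpa using hv)
    _ ≤ ∑ v, g v := Finset.sum_le_univ_sum_of_nonneg hg
    _ = ∑ v, f v - Fintype.card α * R + R * S.ncard := by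
        rw [Finset.sum_add_distrib, Finset.sum_sub_distrib, ← Finset.sum_filter, Finset.sum_const,
          Finset.sum_const, Finset.card_univ, nsmul_eq_mul, nsmul_eq_mul, mul_comm R,
          Set.ncard_eq_toFinset_card', Set.filter_mem_univ_eq_toFinset]
    _ ≤ R * S.ncard := by linarith

section RootedForest

variable {V : Type*} {par : V → Option V}

theorem parIter_add (par : V → Option V) (m n : ℕ) (v : V) :
    parIter par (m + n) v = (parIter par m v).bind (parIter par n) := by
  induction n with
  | zero => cases parIter par m v <;> simp [parIter]
  | succ n ih =>
    rw [← Nat.add_assoc, parIter, ih, Option.bind_assoc]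
    rfl

theorem parIter_add_eq_some_iff {m n : ℕ} {u w : V} :
    parIter par (m + n) w = some u ↔
      ∃ v, parIter par m w = some v ∧ parIter par n v = some u := by
  rw [parIter_add, Option.bind_eq_some_iff]

theorem parIter_sub_eq_some {m n : ℕ} {u v w : V} (hmn : m ≤ n)
    (hv : parIter par m w = some v) (hu : parIter par n w = some u) :
    parIter par (n - m) v = some u := by
  rw [← Nat.add_sub_cancel' hmn, parIter_add, hv] at hu
  simpa using hu

theorem IsAnc.trans {u v w : V} (huv : IsAnc par u v) (hvw : IsAnc par v w) : IsAnc par u w := by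
  obtain ⟨m, -, hm⟩ := huv
  obtain ⟨n, hn, hn'⟩ := hvw
  exact ⟨n + m, by omega, parIter_add_eq_some_iff.2 ⟨v, hn', hm⟩⟩

theorem IsAnc.trichotomous {u v w : V} (hu : IsAnc par u w) (hv : IsAnc par v w) :
    IsAnc par u v ∨ u = v ∨ IsAnc par v u := by
  obtain ⟨m, -, hm⟩ := hu
  obtain ⟨n, -, hn⟩ := hv
  rcases lt_trichotomy m n with h | rfl | h
  · exact .inr (.inr ⟨n - m, by omega, parIter_sub_eq_some h.le hm hn⟩)
  · exact .inr (.inl (Option.some_injective V (hm.symm.trans hn)))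
  · exact .inl ⟨m - n, by omega, parIter_sub_eq_some h.le hn hm⟩

theorem IsRootedForest.not_isAnc_self (hf : IsRootedForest par) (v : V) : ¬IsAnc par v v := by
  rintro ⟨n, hn, hv⟩
  have loop (j : ℕ) : parIter par (j * n) v = some v := by
    induction j with
    | zero => simp [parIter]
    | succ j ih => rw [Nat.succ_mul]; exact parIter_add_eq_some_iff.2 ⟨v, ih, hv⟩
  obtain ⟨m, hm⟩ := hf v
  have hmn := loop m
  rw [← Nat.add_sub_cancel' (Nat.le_mul_of_pos_right m hn), parIter_add, hm] at hmn
  simp at hmn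

theorem IsRootedForest.parIter_index_unique (hf : IsRootedForest par) {m n : ℕ} {v w : V}
    (hm : parIter par m w = some v) (hn : parIter par n w = some v) : m = n := by
  by_contra hne
  rcases Nat.lt_or_gt_of_ne hne with h | h
  · exact hf.not_isAnc_self v ⟨n - m, by omega, parIter_sub_eq_some h.le hm hn⟩
  · exact hf.not_isAnc_self v ⟨m - n, by omega, parIter_sub_eq_some h.le hn hm⟩

/-- The vertices reached from a vertex of `S` by `n` applications of the parent map, for some
`n ∈ N`. Thus `N` is a set of allowed distances, and `0 ∈ N` makes `S` itself a part of it. -/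
def AncAt (par : V → Option V) (N : Set ℕ) (S : Set V) : Set V :=
  {v | ∃ n ∈ N, ∃ w ∈ S, parIter par n w = some v}

theorem ncard_ancAt_le {N : Set ℕ} {S : Set V} (hN : N.Finite) (hS : S.Finite) :
    (AncAt par N S).ncard ≤ N.ncard * S.ncard := by
  have hsub : some '' AncAt par N S ⊆ (fun p : ℕ × V => parIter par p.1 p.2) '' N ×ˢ S := by
    rintro _ ⟨v, ⟨n, hn, w, hw, h⟩, rfl⟩
    exact ⟨(n, w), ⟨hn, hw⟩, h⟩
  have hfin : (N ×ˢ S).Finite := hN.prod hS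
  calc (AncAt par N S).ncard = (some '' AncAt par N S).ncard :=
        (Set.ncard_image_of_injective _ (Option.some_injective V)).symm
    _ ≤ ((fun p : ℕ × V => parIter par p.1 p.2) '' N ×ˢ S).ncard :=
        Set.ncard_le_ncard hsub (hfin.image _)
    _ ≤ (N ×ˢ S).ncard := Set.ncard_image_le hfin
    _ = N.ncard * S.ncard := Set.ncard_prod

theorem mem_descLe_iff_mem_ancAt {v w : V} {r : ℝ} :
    w ∈ DescLe par v r ↔ v ∈ AncAt par (Set.Icc 1 ⌊r⌋₊) {w} := by
  simp only [DescLe, AncAt, Set.mem_ofPred_eq, Set.mem_Icc, Set.mem_singleton_iff,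
    exists_eq_left, and_assoc]
  refine exists_congr fun n => and_congr_right fun hn => ?_
  rw [Nat.le_floor_iff' (by omega)]

theorem sum_ncard_descLe_le [Fintype V] (par : V → Option V) (r : ℝ) :
    ∑ v, (DescLe par v r).ncard ≤ Fintype.card V * ⌊r⌋₊ := by
  calc ∑ v, (DescLe par v r).ncard = ∑ w, {v | w ∈ DescLe par v r}.ncard :=
        sum_ncard_setOf_comm fun v w => w ∈ DescLe par v r
    _ = ∑ w, (AncAt par (Set.Icc 1 ⌊r⌋₊) {w}).ncard := by
        simp only [mem_descLe_iff_mem_ancAt, Set.ofPred_mem_eq]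
    _ ≤ ∑ _w : V, ⌊r⌋₊ := Finset.sum_le_sum fun w _ => by
        simpa using ncard_ancAt_le (par := par) (Set.finite_Icc 1 ⌊r⌋₊) (Set.finite_singleton w)
    _ = Fintype.card V * ⌊r⌋₊ := by simp

theorem IsRootedForest.floor_le_ncard_descLe [Finite V] (hf : IsRootedForest par) {n : ℕ} {r : ℝ}
    {v w : V} (hw : parIter par n w = some v) (hn : ⌊r⌋₊ ≤ n) :
    ⌊r⌋₊ ≤ (DescLe par v r).ncard := by
  have hx (i : ℕ) (hi : i ≤ n) : ∃ x, parIter par i x = some v := by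
    rw [← Nat.sub_add_cancel hi, parIter_add_eq_some_iff] at hw
    exact hw.imp fun _ h => h.2
  have : Nonempty V := ⟨v⟩
  choose! x hx using hx
  have hmem : ∀ i ∈ Set.Icc 1 ⌊r⌋₊, x i ∈ DescLe par v r := fun i hi =>
    ⟨i, hi.1, (Nat.le_floor_iff' (Nat.one_le_iff_ne_zero.1 hi.1)).1 hi.2, hx i (hi.2.trans hn)⟩
  have hinj : Set.InjOn x (Set.Icc 1 ⌊r⌋₊) := fun i hi j hj hij =>
    hf.parIter_index_unique (hx i (hi.2.trans hn)) (hij ▸ hx j (hj.2.trans hn))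
  simpa using Set.ncard_le_ncard_of_injOn x hmem hinj

/-- The lowest vertices of `S`: those with no proper descendant in `S`. -/
def Lowest (par : V → Option V) (S : Set V) : Set V :=
  {v ∈ S | Disjoint (Desc par v) S}

theorem IsRootedForest.exists_mem_lowest [Finite V] (hf : IsRootedForest par) {S : Set V} {v : V}
    (hv : v ∈ S) : ∃ m ∈ Lowest par S, ∃ n, parIter par n m = some v := by
  have : IsTrans V fun x y => IsAnc par y x := ⟨fun _ _ _ hxy hyz => hyz.trans hxy⟩
  have : Std.Irrefl fun x y => IsAnc par y x := ⟨hf.not_isAnc_self⟩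
  have hwf := Finite.wellFounded_of_trans_of_irrefl fun x y => IsAnc par y x
  obtain ⟨m, ⟨hmS, n, hn⟩, hmin⟩ :=
    hwf.has_min {w ∈ S | ∃ n, parIter par n w = some v} ⟨v, hv, 0, rfl⟩
  refine ⟨m, ⟨hmS, Set.disjoint_left.2 fun x hx hxS => ?_⟩, n, hn⟩
  obtain ⟨i, -, hi⟩ := id hx
  exact hmin x ⟨hxS, i + n, parIter_add_eq_some_iff.2 ⟨m, hi, hn⟩⟩ hx

theorem pairwiseDisjoint_desc_lowest (par : V → Option V) (S : Set V) :
    (Lowest par S).PairwiseDisjoint (Desc par) := by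
  intro u hu v hv huv
  refine Set.disjoint_left.2 fun w hwu hwv => ?_
  rcases IsAnc.trichotomous hwu hwv with h | h | h
  · exact Set.disjoint_left.1 hu.2 h hv.1
  · exact huv h
  · exact Set.disjoint_left.1 hv.2 h hu.1

theorem mul_ncard_lowest_le [Finite V] {S : Set V} {a : ℝ}
    (hS : ∀ v ∈ S, a ≤ (Desc par v).ncard) :
    a * (Lowest par S).ncard ≤ Sᶜ.ncard := by
  have hfin := (Lowest par S).toFinite
  have hsub : ⋃ v ∈ Lowest par S, Desc par v ⊆ Sᶜ :=
    Set.iUnion₂_subset fun v hv => hv.2.subset_compl_right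
  have hsum : ∑ v ∈ hfin.toFinset, (Desc par v).ncard ≤ Sᶜ.ncard := by
    rw [← finsum_mem_eq_finite_toFinset_sum, ← hfin.ncard_biUnion (fun _ _ => Set.toFinite _)
      (pairwiseDisjoint_desc_lowest par S)]
    exact Set.ncard_le_ncard hsub
  calc a * (Lowest par S).ncard = ∑ _v ∈ hfin.toFinset, a := by
        rw [Finset.sum_const, nsmul_eq_mul, Set.ncard_eq_toFinset_card _ hfin, mul_comm]
    _ ≤ ∑ v ∈ hfin.toFinset, ((Desc par v).ncard : ℝ) :=
        Finset.sum_le_sum fun v hv => hS v (hfin.mem_toFinset.1 hv).1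
    _ ≤ Sᶜ.ncard := mod_cast hsum

/-- The poor vertices: those with fewer than `a` descendants. -/
def Poor (par : V → Option V) (a : ℝ) : Set V :=
  {v | ((Desc par v).ncard : ℝ) < a}

/-- The heavy vertices: those with more than `t` descendants at distance at most `r`. -/
def Heavy (par : V → Option V) (r t : ℝ) : Set V :=
  {v | t < ((DescLe par v r).ncard : ℝ)}

/-- The vertices at distance less than `R` above a lowest non-poor vertex (distance `0` included);
together with the poor vertices, the only ones that may have fewer than `R` descendants at distance
at most `R`. -/
def Shallow (par : V → Option V) (a : ℝ) (R : ℕ) : Set V :=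
  AncAt par (Set.Iio R) (Lowest par (Poor par a)ᶜ)

theorem IsRootedForest.floor_le_ncard_descLe_of_notMem [Finite V] (hf : IsRootedForest par)
    {a r : ℝ} {v : V} (hv : v ∉ Poor par a ∪ Shallow par a ⌊r⌋₊) :
    ⌊r⌋₊ ≤ (DescLe par v r).ncard := by
  rw [Set.mem_union, not_or] at hv
  obtain ⟨m, hm, n, hn⟩ := hf.exists_mem_lowest (S := (Poor par a)ᶜ) hv.1
  exact hf.floor_le_ncard_descLe hn (not_lt.1 fun hnR => hv.2 ⟨n, hnR, m, hm, hn⟩)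

theorem ncard_poor_union_shallow_le [Finite V] (par : V → Option V) {a : ℝ} (ha : 0 < a) (R : ℕ) :
    ((Poor par a ∪ Shallow par a R).ncard : ℝ) ≤ (1 + R / a) * (Poor par a).ncard := by
  have hlowest : a * (Lowest par (Poor par a)ᶜ).ncard ≤ (Poor par a).ncard := by
    simpa using mul_ncard_lowest_le (par := par) (S := (Poor par a)ᶜ) fun v hv => not_lt.1 hv
  have hshallow : ((Shallow par a R).ncard : ℝ) ≤ R * (Lowest par (Poor par a)ᶜ).ncard := by
    have := ncard_ancAt_le (par := par) (Set.finite_Iio R) (Lowest par (Poor par a)ᶜ).toFinite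
    rw [Set.ncard_Iio_nat] at this
    exact mod_cast this
  calc ((Poor par a ∪ Shallow par a R).ncard : ℝ)
      ≤ (Poor par a).ncard + (Shallow par a R).ncard := mod_cast Set.ncard_union_le _ _
    _ ≤ (Poor par a).ncard + R * ((Poor par a).ncard / a) := by
        gcongr
        refine hshallow.trans ?_
        gcongr
        exact (le_div_iff₀' ha).2 hlowest
    _ = (1 + R / a) * (Poor par a).ncard := by ring

theorem IsRootedForest.ncard_heavy_le [Finite V] (hf : IsRootedForest par) {a r t : ℝ}
    (ha : 0 < a) (hr : 0 ≤ r) (hrt : r < t) :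
    ((Heavy par r t).ncard : ℝ) ≤ r / (t - r) * (1 + r / a) * (Poor par a).ncard := by
  have := Fintype.ofFinite V
  have hfloor : (⌊r⌋₊ : ℝ) ≤ r := Nat.floor_le hr
  have hsum : ∑ v, ((DescLe par v r).ncard : ℝ) ≤ Fintype.card V * (⌊r⌋₊ : ℝ) :=
    mod_cast sum_ncard_descLe_le par r
  have hheavy : (t - r) * (Heavy par r t).ncard ≤ r * ((1 + r / a) * (Poor par a).ncard) :=
    calc (t - r) * (Heavy par r t).ncard
        ≤ (t - ⌊r⌋₊) * (Heavy par r t).ncard := by gcongr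
      _ ≤ ⌊r⌋₊ * (Poor par a ∪ Shallow par a ⌊r⌋₊).ncard :=
          sub_mul_ncard_setOf_lt_le t (Nat.cast_nonneg _) (fun _ => Nat.cast_nonneg _)
            (fun _ hv => mod_cast hf.floor_le_ncard_descLe_of_notMem hv) hsum
      _ ≤ ⌊r⌋₊ * ((1 + ⌊r⌋₊ / a) * (Poor par a).ncard) := by
          gcongr
          exact ncard_poor_union_shallow_le par ha _
      _ ≤ r * ((1 + r / a) * (Poor par a).ncard) := by gcongr
  rw [mul_assoc, div_mul_eq_mul_div]
  exact (le_div_iff₀' (sub_pos.2 hrt)).2 hheavy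

end RootedForest

theorem few_heavy_vertices_general {ι : Type*} {l : Filter ι} {V : ι → Type*} [∀ i, Fintype (V i)]
    {par : ∀ i, V i → Option (V i)} {α β γ : ℝ} {k : ι → ℝ}
    (hα : 0 < α) (hβ : 0 ≤ β) (hβγ : β < γ) (hk : ∀ᶠ i in l, 0 < k i)
    (hforest : ∀ i, IsRootedForest (par i))
    (hpoor : Tendsto (fun i => ((Poor (par i) (α * k i)).ncard : ℝ) / Fintype.card (V i))
      l (nhds 0)) :
    Tendsto (fun i => ((Heavy (par i) (β * k i) (γ * k i)).ncard : ℝ) / Fintype.card (V i))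
      l (nhds 0) := by
  have hlim := hpoor.const_mul (β / (γ - β) * (1 + β / α))
  rw [mul_zero] at hlim
  refine squeeze_zero' (.of_forall fun i => by positivity) ?_ hlim
  filter_upwards [hk] with i hki
  have hheavy := (hforest i).ncard_heavy_le (mul_pos hα hki) (mul_nonneg hβ hki.le)
    (mul_lt_mul_of_pos_right hβγ hki)
  rw [← sub_mul, mul_div_mul_right _ _ hki.ne', mul_div_mul_right _ _ hki.ne'] at hheavy
  rw [← mul_div_assoc]
  gcongr

/-- **First step of the proof of Lemma 6 of the paper.**  Fix `0 < ε < 1/10`.  Let `(T_k)`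
be a sequence of finite rooted forests with `n_k` vertices; call `v` *poor* if
`|D(v)| < εk`, and *heavy* if `|D_{≤(1-5ε)k}(v)| > (1-4ε)k`.  If the number of poor
vertices is `o(n_k)`, then the number of heavy vertices is `o(n_k)`. -/
theorem few_heavy_vertices (ε : ℝ) (hε0 : 0 < ε) (hε : ε < 1 / 10)
    (V : ℕ → Type) [∀ k, Fintype (V k)]
    (par : ∀ k, V k → Option (V k))
    (hforest : ∀ k, IsRootedForest (par k))
    (hpoor : Tendsto (fun k =>
        ({v : V k | ((Desc (par k) v).ncard : ℝ) < ε * k}.ncard : ℝ) / Fintype.card (V k))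
      atTop (nhds 0)) :
    Tendsto (fun k =>
        ({v : V k | (1 - 4 * ε) * k <
            ((DescLe (par k) v ((1 - 5 * ε) * k)).ncard : ℝ)}.ncard : ℝ) / Fintype.card (V k))
      atTop (nhds 0) := by
  exact few_heavy_vertices_general hε0 (by linarith) (by linarith)
    ((eventually_gt_atTop 0).mono fun _ => Nat.cast_pos.2) hforest hpoor
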